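/- In the duad-syntheme incidence structure, the following hold: every syntheme contains exactly 3 duads; every duad is contained in exactly 3 synthemes; any two distinct duads are contained in at most one common syntheme; and for every duad p and every syntheme L with p ∉ L, there is exactly one duad q ∈ L such that p and q lie in a common syntheme. (Thus the structure is a generalized quadrangle of order two, the doily.) -/

import Mathlib

/-- A duad: a 2-element subset of the 6-element set. -/
def IsDuad (p : Finset (Fin 6)) : Prop := p.card = 2

/-- A syntheme: a set of three duads partitioning the 6-element set. -/
def IsSyntheme (L : Finset (Finset (Fin 6))) : Prop :=
  L.card = 3 ∧ (∀ p ∈ L, IsDuad p) ∧ ∀ i : Fin 6, ∃! p, p ∈ L ∧ i ∈ p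

/-- Two distinct members of a syntheme are disjoint. -/
theorem synth_disjoint {L : Finset (Finset (Fin 6))} (hL : IsSyntheme L)
    {p q : Finset (Fin 6)} (hp : p ∈ L) (hq : q ∈ L) (hpq : p ≠ q) : Disjoint p q := by
  rw [Finset.disjoint_left]
  intro i hip hiq
  exact hpq ((hL.2.2 i).unique ⟨hp, hip⟩ ⟨hq, hiq⟩)

/-- A syntheme is determined by two of its members. -/
theorem synth_eq {L : Finset (Finset (Fin 6))} (hL : IsSyntheme L)
    {p q : Finset (Fin 6)} (hp : p ∈ L) (hq : q ∈ L) (hpq : p ≠ q) :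
    L = {p, q, (p ∪ q)ᶜ} := by
  have hsub : ({p, q} : Finset (Finset (Fin 6))) ⊆ L := by
    intro x hx
    simp only [Finset.mem_insert, Finset.mem_singleton] at hx
    rcases hx with rfl | rfl <;> assumption
  have hc : (L \ {p, q}).card = 1 := by
    rw [Finset.card_sdiff_of_subset hsub, hL.1, Finset.card_pair hpq]
  obtain ⟨r, hr⟩ := Finset.card_eq_one.1 hc
  have hmem : ∀ x, x ∈ L ↔ x = p ∨ x = q ∨ x = r := by
    intro x
    have := Finset.ext_iff.1 hr x
    simp only [Finset.mem_sdiff, Finset.mem_insert, Finset.mem_singleton] at this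
    by_cases h1 : x = p
    · simp [h1, hp]
    · by_cases h2 : x = q
      · simp [h2, hq]
      · simpa [h1, h2] using this
  have hrm : r ∈ L \ {p, q} := by rw [hr]; simp
  simp only [Finset.mem_sdiff, Finset.mem_insert, Finset.mem_singleton, not_or] at hrm
  obtain ⟨hrL, hrp, hrq⟩ := hrm
  have hre : r = (p ∪ q)ᶜ := by
    ext i
    simp only [Finset.mem_compl, Finset.mem_union, not_or]
    constructor
    · intro hi
      exact ⟨Finset.disjoint_left.1 (synth_disjoint hL hrL hp hrp) hi,
        Finset.disjoint_left.1 (synth_disjoint hL hrL hq hrq) hi⟩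
    · rintro ⟨h1, h2⟩
      obtain ⟨x, ⟨hx, hix⟩, -⟩ := hL.2.2 i
      rcases (hmem x).1 hx with rfl | rfl | rfl
      · exact absurd hix h1
      · exact absurd hix h2
      · exact hix
  ext x
  rw [hmem, hre]
  simp

/-- Every member of a syntheme has a different companion. -/
theorem synth_other {L : Finset (Finset (Fin 6))} (hL : IsSyntheme L)
    (p : Finset (Fin 6)) : ∃ q ∈ L, p ≠ q := by
  have : 1 < L.card := by rw [hL.1]; norm_num
  obtain ⟨q, hq, h⟩ := Finset.exists_mem_ne this p
  exact ⟨q, hq, h.symm⟩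

/-- Two disjoint duads and the complementary duad form a syntheme. -/
theorem synth_mk {p q : Finset (Fin 6)} (hp : IsDuad p) (hq : IsDuad q)
    (h : Disjoint p q) : IsSyntheme {p, q, (p ∪ q)ᶜ} := by
  unfold IsDuad at hp hq
  have hu : ((p ∪ q)ᶜ).card = 2 := by
    rw [Finset.card_compl, Finset.card_union_of_disjoint h, hp, hq, Fintype.card_fin]
  have hd := Finset.disjoint_left.1 h
  have hne : ∀ {a b : Finset (Fin 6)}, a.card = 2 → Disjoint a b → a ≠ b := by
    rintro a b ha hab rfl
    rw [disjoint_self] at hab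
    simp [hab] at ha
  refine ⟨?_, ?_, ?_⟩
  · rw [Finset.card_eq_three]
    refine ⟨p, q, _, hne hp h, hne hp ?_, hne hq ?_, rfl⟩
    · exact disjoint_compl_right.mono_left Finset.subset_union_left
    · exact disjoint_compl_right.mono_left Finset.subset_union_right
  · intro x hx
    simp only [Finset.mem_insert, Finset.mem_singleton] at hx
    rcases hx with rfl | rfl | rfl <;> assumption
  · intro i
    by_cases h1 : i ∈ p
    · refine ⟨p, by simp [h1], ?_⟩
      rintro y ⟨hy, hiy⟩
      simp only [Finset.mem_insert, Finset.mem_singleton] at hy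
      rcases hy with rfl | rfl | rfl
      · rfl
      · exact absurd hiy (hd h1)
      · simp [h1] at hiy
    · by_cases h2 : i ∈ q
      · refine ⟨q, by simp [h2], ?_⟩
        rintro y ⟨hy, hiy⟩
        simp only [Finset.mem_insert, Finset.mem_singleton] at hy
        rcases hy with rfl | rfl | rfl
        · exact absurd hiy h1
        · rfl
        · simp [h2] at hiy
      · refine ⟨(p ∪ q)ᶜ, by simp [h1, h2], ?_⟩
        rintro y ⟨hy, hiy⟩
        simp only [Finset.mem_insert, Finset.mem_singleton] at hy
        rcases hy with rfl | rfl | rfl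
        · exact absurd hiy h1
        · exact absurd hiy h2
        · rfl

/-- Each duad extends to exactly three triples, by direct computation. -/
theorem count_three : ∀ p ∈ Finset.powersetCard 2 (Finset.univ : Finset (Fin 6)),
    ((Finset.powersetCard 2 pᶜ).image
      (fun q => ({p, q, (p ∪ q)ᶜ} : Finset (Finset (Fin 6))))).card = 3 := by
  decide +kernel

/-- The duad–syntheme incidence structure is a generalized quadrangle of order two (the
doily): every syntheme contains exactly 3 duads, every duad lies in exactly 3 synthemes,
two distinct duads lie in at most one common syntheme, and for every duad p and every
syntheme L not containing p there is exactly one duad q on L collinear with p. -/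
theorem duad_syntheme_is_GQ_2_2 :
    (∀ L, IsSyntheme L → L.card = 3) ∧
    (∀ p, IsDuad p → {L | IsSyntheme L ∧ p ∈ L}.ncard = 3) ∧
    (∀ p q, IsDuad p → IsDuad q → p ≠ q →
      {L | IsSyntheme L ∧ p ∈ L ∧ q ∈ L}.Subsingleton) ∧
    (∀ p L, IsDuad p → IsSyntheme L → p ∉ L →
      ∃! q, q ∈ L ∧ ∃ M, IsSyntheme M ∧ p ∈ M ∧ q ∈ M) := by
  refine ⟨fun L hL => hL.1, ?_, ?_, ?_⟩
  · intro p hp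
    have key : {L | IsSyntheme L ∧ p ∈ L} = (((Finset.powersetCard 2 pᶜ).image
        (fun q => ({p, q, (p ∪ q)ᶜ} : Finset (Finset (Fin 6))))) :
          Set (Finset (Finset (Fin 6)))) := by
      ext L
      simp only [Set.mem_setOf_eq, Finset.mem_coe, Finset.mem_image, Finset.mem_powersetCard]
      constructor
      · rintro ⟨hL, hpL⟩
        obtain ⟨q, hq, hpq⟩ := synth_other hL p
        refine ⟨q, ⟨?_, hL.2.1 q hq⟩, (synth_eq hL hpL hq hpq).symm⟩
        exact (synth_disjoint hL hpL hq hpq).symm.le_compl_right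
      · rintro ⟨q, ⟨hq, hqc⟩, rfl⟩
        exact ⟨synth_mk hp hqc (le_compl_iff_disjoint_left.1 hq), by simp⟩
    rw [key, Set.ncard_coe_finset]
    exact count_three p (Finset.mem_powersetCard.2 ⟨Finset.subset_univ _, hp⟩)
  · rintro p q - - hpq L ⟨hL, hp, hq⟩ M ⟨hM, hp', hq'⟩
    rw [synth_eq hL hp hq hpq, synth_eq hM hp' hq' hpq]
  · intro p L hp hL hpL
    have col : ∀ q ∈ L, (∃ M, IsSyntheme M ∧ p ∈ M ∧ q ∈ M) ↔ Disjoint p q := by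
      intro q hq
      constructor
      · rintro ⟨M, hM, h1, h2⟩
        exact synth_disjoint hM h1 h2 (fun h => hpL (h ▸ hq))
      · intro h
        exact ⟨_, synth_mk hp (hL.2.1 q hq) h, by simp, by simp⟩
    obtain ⟨x, y, hxy, rfl⟩ := Finset.card_eq_two.1 hp
    obtain ⟨a, ⟨ha, hxa⟩, -⟩ := hL.2.2 x
    obtain ⟨b, ⟨hb, hyb⟩, -⟩ := hL.2.2 y
    have hab : a ≠ b := by
      rintro rfl
      apply hpL
      have : ({x, y} : Finset (Fin 6)) = a := by
        apply Finset.eq_of_subset_of_card_le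
        · intro z hz
          simp only [Finset.mem_insert, Finset.mem_singleton] at hz
          rcases hz with rfl | rfl <;> assumption
        · rw [hL.2.1 a ha, Finset.card_pair hxy]
      rwa [this]
    have hLe := synth_eq hL ha hb hab
    have hc : (a ∪ b)ᶜ ∈ L := by
      have : (a ∪ b)ᶜ ∈ ({a, b, (a ∪ b)ᶜ} : Finset (Finset (Fin 6))) := by simp
      rwa [← hLe] at this
    refine ⟨(a ∪ b)ᶜ, ⟨hc, (col _ hc).2 ?_⟩, ?_⟩
    · rw [Finset.disjoint_left]
      intro z hz
      simp only [Finset.mem_insert, Finset.mem_singleton] at hz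
      rcases hz with rfl | rfl <;> simp [hxa, hyb]
    · rintro q ⟨hq, hM⟩
      have hd := Finset.disjoint_left.1 ((col q hq).1 hM)
      have hq' := hq
      rw [hLe] at hq'
      simp only [Finset.mem_insert, Finset.mem_singleton] at hq'
      rcases hq' with rfl | rfl | h
      · exact absurd hxa (hd (by simp))
      · exact absurd hyb (hd (by simp))
      · exact h
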